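/- Let k=(k_1,…,k_r) be a composition and let α∈ℂ∖ℕ with ℜ(α)<1. Then ∫_0^1 Li_k(x)/(x(1−x)^α) dx = ζ((←k^∨)_+; 1−α). -/

import Mathlib

open scoped BigOperators
open MeasureTheory

/-- Multiple polylogarithm `Li_k(z) = Σ_{n₁>⋯>n_r>0} z^{n₁}/(n₁^{k₁}⋯n_r^{k_r})`. -/
noncomputable def MPL (k : List ℕ) (z : ℝ) : ℝ :=
  if h : 0 < k.length then
    ∑' n : {n : Fin k.length → ℕ // StrictAnti n ∧ ∀ i, 0 < n i},
      z ^ (n.1 ⟨0, h⟩) / ∏ i, (n.1 i : ℝ) ^ k.get i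
  else 1

/-- Level-two multiple polylogarithm
`A(k;x) = 2^r Σ_{n₁>⋯>n_r>0, n_j ≡ r+1-j (mod 2)} x^{n₁}/(n₁^{k₁}⋯n_r^{k_r})`. -/
noncomputable def AFn (k : List ℕ) (x : ℝ) : ℝ :=
  if h : 0 < k.length then
    2 ^ k.length *
      ∑' n : {n : Fin k.length → ℕ //
          StrictAnti n ∧ (∀ i, 0 < n i) ∧ ∀ i, n i % 2 = (k.length - i.val) % 2},
        x ^ (n.1 ⟨0, h⟩) / ∏ i, (n.1 i : ℝ) ^ k.get i
  else 1

/-- Multiple zeta value `ζ(k) = Σ_{n₁>⋯>n_r>0} ∏ 1/n_i^{k_i}`. -/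
noncomputable def MZV (k : List ℕ) : ℝ :=
  ∑' n : {n : Fin k.length → ℕ // StrictAnti n ∧ ∀ i, 0 < n i},
    ∏ i, 1 / (n.1 i : ℝ) ^ k.get i

/-- Multiple zeta star value `ζ⋆(k) = Σ_{n₁≥⋯≥n_r>0} ∏ 1/n_i^{k_i}`. -/
noncomputable def MZSV (k : List ℕ) : ℝ :=
  ∑' n : {n : Fin k.length → ℕ // Antitone n ∧ ∀ i, 0 < n i},
    ∏ i, 1 / (n.1 i : ℝ) ^ k.get i

/-- Multiple T-value `T(k) = 2^r Σ_{n₁>⋯>n_r>0, n_j ≡ r+1-j (mod 2)} ∏ 1/n_i^{k_i}`. -/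
noncomputable def MTV (k : List ℕ) : ℝ :=
  2 ^ k.length *
    ∑' n : {n : Fin k.length → ℕ //
        StrictAnti n ∧ (∀ i, 0 < n i) ∧ ∀ i, n i % 2 = (k.length - i.val) % 2},
      ∏ i, 1 / (n.1 i : ℝ) ^ k.get i

/-- Hurwitz-type multiple zeta value `ζ(k;α) = Σ_{n₁>⋯>n_r>0} ∏ (n_i+α-1)^{-k_i}`. -/
noncomputable def HMZV (k : List ℕ) (α : ℂ) : ℂ :=
  ∑' n : {n : Fin k.length → ℕ // StrictAnti n ∧ ∀ i, 0 < n i},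
    ∏ i, ((n.1 i : ℂ) + α - 1) ^ (-(k.get i : ℤ))

/-- Hurwitz-type multiple zeta star value `ζ⋆(k;α) = Σ_{n₁≥⋯≥n_r>0} ∏ (n_i+α-1)^{-k_i}`. -/
noncomputable def HMZSV (k : List ℕ) (α : ℂ) : ℂ :=
  ∑' n : {n : Fin k.length → ℕ // Antitone n ∧ ∀ i, 0 < n i},
    ∏ i, ((n.1 i : ℂ) + α - 1) ^ (-(k.get i : ℤ))

/-- Hurwitz-type multiple T-value
`T(k;α) = Σ_{m₁>⋯>m_r>0} 2^r ∏_i (2m_i - r - 2 + i + α)^{-k_i}` (1-indexed `i`). -/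
noncomputable def HMTV (k : List ℕ) (α : ℂ) : ℂ :=
  ∑' n : {n : Fin k.length → ℕ // StrictAnti n ∧ ∀ i, 0 < n i},
    2 ^ k.length *
      ∏ i, (2 * (n.1 i : ℂ) - (k.length : ℂ) - 1 + (i.val : ℂ) + α) ^ (-(k.get i : ℤ))

/-- The boolean word (sequence of bits between consecutive units) of a composition. -/
def toWord : List ℕ → List Bool
  | [] => []
  | [a] => List.replicate (a - 1) false
  | a :: b :: rest => List.replicate (a - 1) false ++ true :: toWord (b :: rest)

/-- The composition corresponding to a boolean word. -/
def fromWord : List Bool → List ℕ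
  | [] => [1]
  | false :: w =>
    match fromWord w with
    | [] => [1]
    | a :: t => (a + 1) :: t
  | true :: w => 1 :: fromWord w

/-- Hoffman dual of a composition: swap commas and plus signs in
`k = (1+⋯+1, …, 1+⋯+1)`. -/
def HDual (k : List ℕ) : List ℕ := fromWord ((toWord k).map fun b => !b)

/-- `k₊ = (k₁+1, k₂, …, k_r)`. -/
def plusOne : List ℕ → List ℕ
  | [] => []
  | a :: t => (a + 1) :: t

/-- `Refines l k` means the composition `k` can be obtained from `l`
by combining some consecutive parts of `l`, i.e. `l ⪰ k`. -/
inductive Refines : List ℕ → List ℕ → Prop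
  | nil : Refines [] []
  | cons (b l k : List ℕ) : b ≠ [] → Refines l k → Refines (b ++ l) (b.sum :: k)

/-- Arakawa–Kaneko zeta function `ξ(s;k) = (1/Γ(s)) ∫_0^∞ t^{s-1}/(e^t-1) Li_k(1-e^{-t}) dt`. -/
noncomputable def xiAK (s : ℂ) (k : List ℕ) : ℂ :=
  (1 / Complex.Gamma s) *
    ∫ t in Set.Ioi (0 : ℝ),
      (t : ℂ) ^ (s - 1) / ((Real.exp t : ℂ) - 1) * (MPL k (1 - Real.exp (-t)) : ℂ)

/-- Kaneko–Tsumura η-function `η(s;k) = (1/Γ(s)) ∫_0^∞ t^{s-1}/(1-e^t) Li_k(1-e^{t}) dt`. -/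
noncomputable def etaKT (s : ℂ) (k : List ℕ) : ℂ :=
  (1 / Complex.Gamma s) *
    ∫ t in Set.Ioi (0 : ℝ),
      (t : ℂ) ^ (s - 1) / (1 - (Real.exp t : ℂ)) * (MPL k (1 - Real.exp t) : ℂ)

/-- Kaneko–Tsumura ψ-function `ψ(s;k) = (1/Γ(s)) ∫_0^∞ t^{s-1} A(k; tanh(t/2))/sinh(t) dt`. -/
noncomputable def psiKT (s : ℂ) (k : List ℕ) : ℂ :=
  (1 / Complex.Gamma s) *
    ∫ t in Set.Ioi (0 : ℝ),
      (t : ℂ) ^ (s - 1) * ((AFn k (Real.tanh (t / 2)) / Real.sinh t : ℝ) : ℂ)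

/-- Riemann zeta value `ζ(a) = Σ_{n>0} 1/n^a`. -/
noncomputable def zeta1 (a : ℕ) : ℝ := ∑' n : {n : ℕ // 0 < n}, 1 / (n.1 : ℝ) ^ a

/-- Double zeta value `ζ(a,b) = Σ_{n₁>n₂>0} 1/(n₁^a n₂^b)`. -/
noncomputable def zeta2 (a b : ℕ) : ℝ :=
  ∑' p : {p : ℕ × ℕ // p.2 < p.1 ∧ 0 < p.2}, 1 / ((p.1.1 : ℝ) ^ a * (p.1.2 : ℝ) ^ b)

/-- Single T-value `T(a) = 2 Σ_{n>0 odd} 1/n^a`. -/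
noncomputable def T1 (a : ℕ) : ℝ := 2 * ∑' n : {n : ℕ // 0 < n ∧ n % 2 = 1}, 1 / (n.1 : ℝ) ^ a

/-- Double T-value `T(a,b) = 4 Σ_{n₁>n₂>0, n₁ even, n₂ odd} 1/(n₁^a n₂^b)`. -/
noncomputable def T2 (a b : ℕ) : ℝ :=
  4 * ∑' p : {p : ℕ × ℕ // p.2 < p.1 ∧ 0 < p.2 ∧ p.1 % 2 = 0 ∧ p.2 % 2 = 1},
    1 / ((p.1.1 : ℝ) ^ a * (p.1.2 : ℝ) ^ b)

/-!
Both sides are holomorphic in `α` on `Re α < 1`, so by the identity theorem it suffices to treat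
real `α = b < 1`. Then every integrand and every summand is nonnegative, and all manipulations are
legitimate in `[0, ∞]`.

Both `Li_k(x)` and `∑ x^{n₁ - b} ∏ (nᵢ - b)^{-kᵢ}` are iterated integrals in the forms `dt/t` and
`dt/(1-t)`, with innermost function `1` and `t^{-b}` respectively: `dt/t` raises the first exponent
and `dt/(1-t) = ∑ tʲ dt` prepends a new exponent `1`. In `∫₀¹ Li_k(x) (1-x)^{-b} dx/x`, Tonelli's
theorem followed by `t ↦ 1 - t` moves the letters of `k` one at a time to an iterated integral
over `t^{-b}`. Each move swaps the two forms, and together the moves reverse the word; on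
compositions this is exactly `k ↦ (←k^∨)₊`.
-/

open Set Filter ProbabilityTheory
open scoped ENNReal Topology

/-! ### Words and compositions -/

lemma exists_fromWord_eq_cons (w : List Bool) : ∃ a t, fromWord w = a :: t := by
  match w with
  | [] => exact ⟨1, [], rfl⟩
  | true :: w => exact ⟨1, fromWord w, rfl⟩
  | false :: w =>
    obtain ⟨a, t, h⟩ := exists_fromWord_eq_cons w
    exact ⟨a + 1, t, by simp only [fromWord, h]⟩

lemma fromWord_replicate_append (n : ℕ) {w : List Bool} {a : ℕ} {t : List ℕ}
    (h : fromWord w = a :: t) : fromWord (List.replicate n false ++ w) = (a + n) :: t := by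
  induction n with
  | zero => exact h
  | succ n ih => simp only [List.replicate_succ, List.cons_append, fromWord, ih, add_assoc]

lemma fromWord_toWord {k : List ℕ} (hk : k ≠ []) (hpos : ∀ a ∈ k, 0 < a) :
    fromWord (toWord k) = k := by
  match k with
  | [a] =>
    have ha : 1 + (a - 1) = a := Nat.add_sub_cancel' (hpos a List.mem_cons_self)
    simpa [toWord, ha] using fromWord_replicate_append (a - 1) (w := []) rfl
  | a :: b :: t =>
    have ha : 1 + (a - 1) = a := Nat.add_sub_cancel' (hpos a List.mem_cons_self)
    have ih : fromWord (toWord (b :: t)) = b :: t :=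
      fromWord_toWord (List.cons_ne_nil b t) fun c hc => hpos c (List.mem_cons_of_mem a hc)
    rw [toWord, fromWord_replicate_append (a - 1) rfl, ih, ha]

lemma toWord_concat {k : List ℕ} (hk : k ≠ []) (a : ℕ) :
    toWord (k ++ [a]) = toWord k ++ true :: List.replicate (a - 1) false := by
  match k with
  | [b] => simp [toWord]
  | b :: c :: t => simpa [toWord] using toWord_concat (List.cons_ne_nil c t) a

lemma toWord_reverse (k : List ℕ) : toWord k.reverse = (toWord k).reverse := by
  match k with
  | [] => rfl
  | [a] => simp [toWord]
  | a :: b :: t =>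
    rw [List.reverse_cons, toWord_concat (by simp), toWord_reverse (b :: t), toWord]
    simp

lemma plusOne_fromWord (w : List Bool) : plusOne (fromWord w) = fromWord (false :: w) := by
  obtain ⟨a, t, h⟩ := exists_fromWord_eq_cons w
  simp only [fromWord, h, plusOne]

lemma plusOne_HDual_reverse (k : List ℕ) :
    plusOne (HDual k.reverse) = fromWord (false :: (toWord k).reverse.map (!·)) := by
  rw [HDual, plusOne_fromWord, toWord_reverse]

/-! ### Iterated integrals -/

/-- The forms `dt/t` (letter `false`) and `dt/(1-t)` (letter `true`) on the unit interval. -/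
noncomputable def dlogForm : Bool → ℝ → ℝ≥0∞
  | false, t => ENNReal.ofReal t⁻¹
  | true, t => ENNReal.ofReal (1 - t)⁻¹

/-- The iterated integral `∫ dlogForm c₁(t₁) ⋯ dlogForm c_s(t_s) f(t_s)` of a word `c₁ ⋯ c_s` over
`x > t₁ > ⋯ > t_s > 0`. It takes values in `ℝ≥0∞`, so that Tonelli's theorem applies without
convergence conditions. -/
noncomputable def iterIntegral (f : ℝ → ℝ≥0∞) : List Bool → ℝ → ℝ≥0∞
  | [], x => f x
  | c :: w, x => ∫⁻ t in Ioo 0 x, dlogForm c t * iterIntegral f w t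

@[fun_prop]
lemma measurable_dlogForm (c : Bool) : Measurable (dlogForm c) := by
  cases c <;> unfold dlogForm <;> fun_prop

lemma dlogForm_one_sub (c : Bool) (t : ℝ) : dlogForm c (1 - t) = dlogForm (!c) t := by
  cases c <;> simp [dlogForm]

lemma measurable_iterIntegral {f : ℝ → ℝ≥0∞} (hf : Measurable f) (w : List Bool) :
    Measurable (iterIntegral f w) := by
  cases w with
  | nil => exact hf
  | cons c w =>
    have hmono : Monotone (iterIntegral f (c :: w)) := fun x y hxy =>
      lintegral_mono_set (Ioo_subset_Ioo_right hxy)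
    exact hmono.measurable

lemma lintegral_Ioo_mul_lintegral_Ioo {f g : ℝ → ℝ≥0∞} (hf : Measurable f) (hg : Measurable g)
    (a b : ℝ) :
    ∫⁻ x in Ioo a b, (∫⁻ s in Ioo a x, f s) * g x =
      ∫⁻ s in Ioo a b, f s * ∫⁻ x in Ioo s b, g x := by
  let F : ℝ → ℝ → ℝ≥0∞ := fun x s => {p : ℝ × ℝ | a < p.2 ∧ p.2 < p.1 ∧ p.1 < b}.indicator
    (fun p => f p.2 * g p.1) (x, s)
  have hF : Measurable (Function.uncurry F) := by
    refine Measurable.indicator (by fun_prop) ?_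
    exact (measurableSet_lt measurable_const measurable_snd).inter
      ((measurableSet_lt measurable_snd measurable_fst).inter
        (measurableSet_lt measurable_fst measurable_const))
  have hleft : ∀ x, ∫⁻ s, F x s =
      (Ioo a b).indicator (fun x => (∫⁻ s in Ioo a x, f s) * g x) x := fun x => by
    by_cases hx : x ∈ Ioo a b
    · rw [indicator_of_mem hx, ← lintegral_mul_const _ hf, ← lintegral_indicator measurableSet_Ioo]
      refine lintegral_congr fun s => ?_
      simp [F, indicator, hx.2]
    · rw [indicator_of_notMem hx]
      refine (lintegral_congr fun s => indicator_of_notMem ?_ _).trans lintegral_zero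
      exact fun hs => hx ⟨hs.1.trans hs.2.1, hs.2.2⟩
  have hright : ∀ s, ∫⁻ x, F x s =
      (Ioo a b).indicator (fun s => f s * ∫⁻ x in Ioo s b, g x) s := fun s => by
    by_cases hs : s ∈ Ioo a b
    · rw [indicator_of_mem hs, ← lintegral_const_mul _ hg, ← lintegral_indicator measurableSet_Ioo]
      refine lintegral_congr fun x => ?_
      simp [F, indicator, hs.1]
    · rw [indicator_of_notMem hs]
      refine (lintegral_congr fun x => indicator_of_notMem ?_ _).trans lintegral_zero
      exact fun hx => hs ⟨hx.1, hx.2.1.trans hx.2.2⟩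
  rw [← lintegral_indicator measurableSet_Ioo, ← lintegral_indicator measurableSet_Ioo]
  simp_rw [← hleft, ← hright]
  exact lintegral_lintegral_swap hF.aemeasurable

lemma lintegral_Ioo_sub_left (c a b : ℝ) (f : ℝ → ℝ≥0∞) :
    ∫⁻ x in Ioo a b, f (c - x) = ∫⁻ y in Ioo (c - b) (c - a), f y := by
  have h := (volume.measurePreserving_sub_left c).setLIntegral_comp_preimage_emb
    (MeasurableEquiv.subLeft c).measurableEmbedding f (Ioo (c - b) (c - a))
  simpa using h

lemma lintegral_Ioo_ofReal {f : ℝ → ℝ} {a b : ℝ} (hab : a ≤ b)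
    (hf : IntervalIntegrable f volume a b) (hf0 : ∀ x ∈ Ioo a b, 0 ≤ f x) :
    ∫⁻ x in Ioo a b, ENNReal.ofReal (f x) = ENNReal.ofReal (∫ x in a..b, f x) := by
  rw [intervalIntegral.integral_of_le hab, integral_Ioc_eq_integral_Ioo,
    ofReal_integral_eq_lintegral_ofReal ((intervalIntegrable_iff_integrableOn_Ioo_of_le hab).1 hf)]
  exact ae_restrict_of_forall_mem measurableSet_Ioo hf0

lemma lintegral_dlogForm_mul_iterIntegral_one_sub (g : ℝ → ℝ≥0∞) (c : Bool) (v : List Bool)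
    (s : ℝ) :
    ∫⁻ x in Ioo s 1, dlogForm c x * iterIntegral g v (1 - x) =
      iterIntegral g ((!c) :: v) (1 - s) := by
  rw [iterIntegral, ← sub_self (1 : ℝ), ← lintegral_Ioo_sub_left]
  simp only [dlogForm_one_sub, Bool.not_not]

/-- Each step moves the outermost letter of the first word, negated, to the front of the second. -/
theorem lintegral_iterIntegral_mul_iterIntegral_one_sub {g : ℝ → ℝ≥0∞} (hg : Measurable g)
    (w : List Bool) (c : Bool) (v : List Bool) :
    ∫⁻ x in Ioo 0 1, iterIntegral (fun _ => 1) w x * (dlogForm c x * iterIntegral g v (1 - x)) =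
      iterIntegral g (w.reverse.map (!·) ++ (!c) :: v) 1 := by
  induction w generalizing c v with
  | nil => simpa [iterIntegral] using lintegral_dlogForm_mul_iterIntegral_one_sub g c v 0
  | cons d w ih =>
    have hF : Measurable fun x => dlogForm d x * iterIntegral (fun _ => 1) w x :=
      (measurable_dlogForm d).mul (measurable_iterIntegral measurable_const w)
    have hG : Measurable fun x => dlogForm c x * iterIntegral g v (1 - x) :=
      (measurable_dlogForm c).mul ((measurable_iterIntegral hg v).comp (by fun_prop))
    calc ∫⁻ x in Ioo 0 1,
          iterIntegral (fun _ => 1) (d :: w) x * (dlogForm c x * iterIntegral g v (1 - x))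
      _ = ∫⁻ s in Ioo 0 1,
            dlogForm d s * iterIntegral (fun _ => 1) w s * iterIntegral g ((!c) :: v) (1 - s) := by
        refine (lintegral_Ioo_mul_lintegral_Ioo hF hG 0 1).trans ?_
        simp only [lintegral_dlogForm_mul_iterIntegral_one_sub]
      _ = ∫⁻ s in Ioo 0 1,
            iterIntegral (fun _ => 1) w s *
              (dlogForm d s * iterIntegral g ((!c) :: v) (1 - s)) := by
        simp only [mul_comm (dlogForm d _), mul_assoc]
      _ = iterIntegral g ((d :: w).reverse.map (!·) ++ (!c) :: v) 1 := by
        simp [ih]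

/-! ### Shifted multiple polylogarithms -/

/-- The index tuples `n₁ > ⋯ > n_r > 0` of nested sums of depth `r`. -/
abbrev IndexTuple (r : ℕ) : Type :=
  {n : Fin r → ℕ // StrictAnti n ∧ ∀ i, 0 < n i}

namespace IndexTuple

/-- The largest entry `n₁`, read as `0` for the empty tuple. -/
def head : {r : ℕ} → IndexTuple r → ℕ
  | 0, _ => 0
  | _ + 1, n => n.1 0

lemma le_head {r : ℕ} (n : IndexTuple r) (i : Fin r) : n.1 i ≤ n.head := by
  cases r with
  | zero => exact i.elim0
  | succ r => exact n.2.1.antitone (Fin.zero_le i)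

lemma strictAnti_cons {r : ℕ} (n : IndexTuple r) (j : ℕ) :
    StrictAnti (Fin.cons (n.head + j + 1) n.1 : Fin (r + 1) → ℕ) := by
  intro i i' hlt
  obtain ⟨i', rfl⟩ := Fin.exists_succ_eq_of_ne_zero (Fin.ne_zero_of_lt hlt)
  cases i using Fin.cases with
  | zero =>
    have := n.le_head i'
    simp only [Fin.cons_zero, Fin.cons_succ]
    omega
  | succ i => simpa using n.2.1 (Fin.succ_lt_succ_iff.1 hlt)

lemma sub_pos_of_lt_one {b : ℝ} (hb : b < 1) {r : ℕ} (n : IndexTuple r) (i : Fin r) :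
    0 < (n.1 i : ℝ) - b := by
  have : (1 : ℝ) ≤ n.1 i := by exact_mod_cast n.2.2 i
  linarith

/-- Prepending an entry that exceeds the largest one by `j + 1`. -/
def cons {r : ℕ} (n : IndexTuple r) (j : ℕ) : IndexTuple (r + 1) :=
  ⟨Fin.cons (n.head + j + 1) n.1, n.strictAnti_cons j, Fin.cases (Nat.succ_pos _) n.2.2⟩

/-- Removing the largest entry. -/
def tail {r : ℕ} (n : IndexTuple (r + 1)) : IndexTuple r :=
  ⟨Fin.tail n.1, n.2.1.comp_strictMono Fin.strictMono_succ, fun i => n.2.2 i.succ⟩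

lemma head_tail_lt {r : ℕ} (n : IndexTuple (r + 1)) : n.tail.head < n.head := by
  cases r with
  | zero => exact n.2.2 0
  | succ r => exact n.2.1 (Fin.succ_pos 0)

/-- An index tuple of depth `r + 1` is its tail together with the excess of its largest entry. -/
def consEquiv (r : ℕ) : IndexTuple r × ℕ ≃ IndexTuple (r + 1) where
  toFun p := p.1.cons p.2
  invFun n := (n.tail, n.head - n.tail.head - 1)
  left_inv p := by
    have htail : (p.1.cons p.2).tail = p.1 := rfl
    have hhead : (p.1.cons p.2).head = p.1.head + p.2 + 1 := rfl
    refine Prod.ext htail ?_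
    simp only [htail, hhead]
    omega
  right_inv n := by
    have hhead : n.tail.head + (n.head - n.tail.head - 1) + 1 = n.1 0 := by
      have := n.head_tail_lt
      change _ = n.head
      omega
    refine Subtype.ext ?_
    simp only [cons, hhead]
    exact Fin.cons_self_tail n.1

end IndexTuple

/-- The weight `∏ᵢ (nᵢ - b)^{-kᵢ}` of an index tuple in a nested sum with exponents `k`. For `b < 1`
all factors are finite. -/
noncomputable def hurwitzWeight (b : ℝ) (k : List ℕ) (n : IndexTuple k.length) : ℝ≥0∞ :=
  ∏ i, (ENNReal.ofReal (n.1 i - b))⁻¹ ^ k.get i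

/-- The shifted multiple polylogarithm `∑ x^{n₁ - b} ∏ᵢ (nᵢ - b)^{-kᵢ}`, which interpolates between
`Li_k(x)` (`b = 0`) and `ζ(k; 1 - b)` (`x = 1`). For the empty composition it is `x^{-b}`. -/
noncomputable def hurwitzPolylog (b : ℝ) (k : List ℕ) (x : ℝ) : ℝ≥0∞ :=
  ∑' n : IndexTuple k.length, hurwitzWeight b k n * ENNReal.ofReal (x ^ (n.head - b))

lemma hurwitzWeight_cons (b : ℝ) (a : ℕ) (t : List ℕ) (n : IndexTuple t.length) (j : ℕ) :
    hurwitzWeight b (a :: t) (n.cons j) =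
      (ENNReal.ofReal ((n.head + j + 1 : ℕ) - b))⁻¹ ^ a * hurwitzWeight b t n :=
  Fin.prod_univ_succ _

lemma hurwitzPolylog_cons (b : ℝ) (a : ℕ) (t : List ℕ) (x : ℝ) :
    hurwitzPolylog b (a :: t) x = ∑' (n : IndexTuple t.length) (j : ℕ),
      (ENNReal.ofReal ((n.head + j + 1 : ℕ) - b))⁻¹ ^ a * hurwitzWeight b t n *
        ENNReal.ofReal (x ^ ((n.head + j + 1 : ℕ) - b)) := by
  rw [← ENNReal.tsum_prod]
  refine ((IndexTuple.consEquiv t.length).tsum_eq _).symm.trans (tsum_congr fun p => ?_)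
  rw [← hurwitzWeight_cons]
  rfl

lemma lintegral_dlogForm_false_mul_rpow {p x : ℝ} (hp : 0 < p) (hx : 0 ≤ x) :
    ∫⁻ s in Ioo 0 x, dlogForm false s * ENNReal.ofReal (s ^ p) =
      (ENNReal.ofReal p)⁻¹ * ENNReal.ofReal (x ^ p) := by
  calc ∫⁻ s in Ioo 0 x, dlogForm false s * ENNReal.ofReal (s ^ p)
    _ = ∫⁻ s in Ioo 0 x, ENNReal.ofReal (s ^ (p - 1)) := by
      refine setLIntegral_congr_fun measurableSet_Ioo fun s hs => ?_
      rw [dlogForm, ← ENNReal.ofReal_mul (inv_nonneg.2 hs.1.le), Real.rpow_sub_one hs.1.ne',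
        mul_comm, ← div_eq_mul_inv]
    _ = ENNReal.ofReal (∫ s in (0 : ℝ)..x, s ^ (p - 1)) :=
      lintegral_Ioo_ofReal hx (intervalIntegral.intervalIntegrable_rpow' (by linarith))
        fun s hs => Real.rpow_nonneg hs.1.le _
    _ = (ENNReal.ofReal p)⁻¹ * ENNReal.ofReal (x ^ p) := by
      rw [integral_rpow (Or.inl (by linarith)), sub_add_cancel, Real.zero_rpow hp.ne', sub_zero,
        ENNReal.ofReal_div_of_pos hp, mul_comm, ← div_eq_mul_inv]

lemma lintegral_dlogForm_false_mul_hurwitzPolylog {b x : ℝ} (hb : b < 1) (hx : 0 ≤ x) (a : ℕ)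
    (t : List ℕ) :
    ∫⁻ s in Ioo 0 x, dlogForm false s * hurwitzPolylog b (a :: t) s =
      hurwitzPolylog b ((a + 1) :: t) x := by
  simp only [hurwitzPolylog_cons, ← ENNReal.tsum_mul_left]
  rw [lintegral_tsum fun n => (by fun_prop)]
  refine tsum_congr fun n => ?_
  rw [lintegral_tsum fun j => (by fun_prop)]
  refine tsum_congr fun j => ?_
  have hpos : 0 < ((n.head + j + 1 : ℕ) : ℝ) - b := by
    push_cast
    linarith [n.head.cast_nonneg (α := ℝ), j.cast_nonneg (α := ℝ)]
  simp only [mul_left_comm (dlogForm false _)]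
  rw [lintegral_const_mul _ (by fun_prop), lintegral_dlogForm_false_mul_rpow hpos hx, pow_succ]
  ring

lemma dlogForm_true_eq_tsum {s : ℝ} (hs : s ∈ Ioo 0 1) :
    dlogForm true s = ∑' j : ℕ, ENNReal.ofReal s ^ j := by
  rw [ENNReal.tsum_geometric, dlogForm, ENNReal.ofReal_inv_of_pos (sub_pos.2 hs.2),
    ENNReal.ofReal_sub _ hs.1.le, ENNReal.ofReal_one]

lemma dlogForm_true_mul_hurwitzPolylog (b : ℝ) (t : List ℕ) {s : ℝ} (hs : s ∈ Ioo 0 1) :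
    dlogForm true s * hurwitzPolylog b t s = dlogForm false s * hurwitzPolylog b (0 :: t) s := by
  rw [dlogForm_true_eq_tsum hs, hurwitzPolylog_cons, hurwitzPolylog, ← ENNReal.tsum_mul_left,
    ← ENNReal.tsum_mul_left]
  refine tsum_congr fun n => ?_
  rw [← ENNReal.tsum_mul_right, ← ENNReal.tsum_mul_left]
  refine tsum_congr fun j => ?_
  have hpow : ENNReal.ofReal s ^ j * ENNReal.ofReal (s ^ (n.head - b)) =
      dlogForm false s * ENNReal.ofReal (s ^ ((n.head + j + 1 : ℕ) - b)) := by
    rw [dlogForm, ← ENNReal.ofReal_pow hs.1.le, ← ENNReal.ofReal_mul (pow_nonneg hs.1.le j),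
      ← ENNReal.ofReal_mul (inv_nonneg.2 hs.1.le), ← Real.rpow_natCast, ← Real.rpow_neg_one,
      ← Real.rpow_add hs.1, ← Real.rpow_add hs.1]
    push_cast
    ring_nf
  rw [pow_zero, one_mul, mul_left_comm, hpow, mul_left_comm]

lemma lintegral_dlogForm_true_mul_hurwitzPolylog {b x : ℝ} (hb : b < 1) (hx : x ∈ Icc 0 1)
    (t : List ℕ) :
    ∫⁻ s in Ioo 0 x, dlogForm true s * hurwitzPolylog b t s = hurwitzPolylog b (1 :: t) x := by
  rw [← lintegral_dlogForm_false_mul_hurwitzPolylog hb hx.1]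
  exact setLIntegral_congr_fun measurableSet_Ioo fun s hs =>
    dlogForm_true_mul_hurwitzPolylog b t ⟨hs.1, hs.2.trans_le hx.2⟩

lemma hurwitzPolylog_nil (b x : ℝ) : hurwitzPolylog b [] x = ENNReal.ofReal (x ^ (-b)) := by
  have : Unique (IndexTuple ([] : List ℕ).length) :=
    { default := ⟨fun i => i.elim0, fun i => i.elim0, fun i => i.elim0⟩
      uniq := fun n => Subtype.ext (funext fun i => i.elim0) }
  rw [hurwitzPolylog, tsum_fintype, Fintype.sum_unique]
  simp [hurwitzWeight, IndexTuple.head]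

theorem hurwitzPolylog_fromWord {b x : ℝ} (hb : b < 1) (hx : x ∈ Icc 0 1) (w : List Bool) :
    hurwitzPolylog b (fromWord w) x =
      iterIntegral (fun t => ENNReal.ofReal (t ^ (-b))) (w ++ [true]) x := by
  induction w generalizing x with
  | nil =>
    rw [fromWord, ← lintegral_dlogForm_true_mul_hurwitzPolylog hb hx]
    simp only [hurwitzPolylog_nil, List.nil_append, iterIntegral]
  | cons c w ih =>
    have hstep : hurwitzPolylog b (fromWord (c :: w)) x =
        ∫⁻ s in Ioo 0 x, dlogForm c s * hurwitzPolylog b (fromWord w) s := by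
      cases c with
      | true => exact (lintegral_dlogForm_true_mul_hurwitzPolylog hb hx _).symm
      | false =>
        obtain ⟨a, t, h⟩ := exists_fromWord_eq_cons w
        simp only [fromWord, h, lintegral_dlogForm_false_mul_hurwitzPolylog hb hx.1]
    rw [hstep, List.cons_append, iterIntegral]
    refine setLIntegral_congr_fun measurableSet_Ioo fun s hs => ?_
    rw [ih ⟨hs.1.le, hs.2.le.trans hx.2⟩]

theorem lintegral_hurwitzPolylog_eq_hurwitzPolylog_one {b : ℝ} (hb : b < 1) (w : List Bool) :
    ∫⁻ x in Ioo 0 1, hurwitzPolylog 0 (fromWord w) x *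
        (dlogForm false x * ENNReal.ofReal ((1 - x) ^ (-b))) =
      hurwitzPolylog b (fromWord (false :: w.reverse.map (!·))) 1 := by
  let g : ℝ → ℝ≥0∞ := fun t => ENNReal.ofReal (t ^ (-b))
  have hg : Measurable g := by fun_prop
  calc ∫⁻ x in Ioo 0 1, hurwitzPolylog 0 (fromWord w) x *
          (dlogForm false x * ENNReal.ofReal ((1 - x) ^ (-b)))
    _ = ∫⁻ x in Ioo 0 1,
          iterIntegral (fun _ => 1) (w ++ [true]) x *
            (dlogForm false x * iterIntegral g [] (1 - x)) := by
      refine setLIntegral_congr_fun measurableSet_Ioo fun x hx => ?_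
      simp [hurwitzPolylog_fromWord one_pos (Ioo_subset_Icc_self hx) w, g, iterIntegral]
    _ = iterIntegral g ((false :: w.reverse.map (!·)) ++ [true]) 1 := by
      simp [lintegral_iterIntegral_mul_iterIntegral_one_sub hg]
    _ = hurwitzPolylog b (fromWord (false :: w.reverse.map (!·))) 1 :=
      (hurwitzPolylog_fromWord hb (right_mem_Icc.2 zero_le_one) _).symm

/-! ### Convergence -/

lemma dlogForm_mul_ofReal_le {t : ℝ} (ε : ℝ) (ht : t ∈ Ioo 0 1) (c : Bool) :
    dlogForm c t * ENNReal.ofReal (t * (1 - t) ^ (-ε)) ≤ ENNReal.ofReal ((1 - t) ^ (-ε - 1)) := by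
  have ht1 : 0 < 1 - t := sub_pos.2 ht.2
  have hpow : 0 < (1 - t) ^ (-ε) := Real.rpow_pos_of_pos ht1 _
  rw [Real.rpow_sub_one ht1.ne']
  cases c with
  | false =>
    rw [dlogForm, ← ENNReal.ofReal_mul (inv_nonneg.2 ht.1.le), inv_mul_cancel_left₀ ht.1.ne']
    exact ENNReal.ofReal_le_ofReal (le_div_self hpow.le ht1 (by linarith [ht.1]))
  | true =>
    rw [dlogForm, ← ENNReal.ofReal_mul (inv_nonneg.2 ht1.le), div_eq_inv_mul]
    gcongr
    exact mul_le_of_le_one_left hpow.le ht.2.le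

lemma lintegral_Ioo_one_sub_rpow_le {ε x : ℝ} (hε : 0 < ε) (hε1 : ε ≤ 1) (hx : x ∈ Ioo 0 1) :
    ∫⁻ t in Ioo 0 x, ENNReal.ofReal ((1 - t) ^ (-ε - 1)) ≤
      ENNReal.ofReal ε⁻¹ * ENNReal.ofReal (x * (1 - x) ^ (-ε)) := by
  have hx1 : 0 < 1 - x := sub_pos.2 hx.2
  have h0 : (0 : ℝ) ∉ uIcc (1 - x) 1 := by
    rw [uIcc_of_le (by linarith [hx.1])]
    exact fun h => hx1.not_ge h.1
  calc ∫⁻ t in Ioo 0 x, ENNReal.ofReal ((1 - t) ^ (-ε - 1))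
    _ = ∫⁻ y in Ioo (1 - x) 1, ENNReal.ofReal (y ^ (-ε - 1)) := by
      simpa using lintegral_Ioo_sub_left 1 0 x fun y => ENNReal.ofReal (y ^ (-ε - 1))
    _ = ENNReal.ofReal (∫ y in (1 - x)..1, y ^ (-ε - 1)) :=
      lintegral_Ioo_ofReal (by linarith [hx.1])
        (intervalIntegral.intervalIntegrable_rpow (Or.inr h0))
        fun y hy => Real.rpow_nonneg (hx1.trans hy.1).le _
    _ ≤ ENNReal.ofReal (ε⁻¹ * (x * (1 - x) ^ (-ε))) := by
      have hle : (1 - x) ^ (-ε) * (1 - x) ≤ 1 := by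
        rw [← Real.rpow_add_one hx1.ne']
        exact Real.rpow_le_one hx1.le (by linarith [hx.1]) (by linarith)
      rw [integral_rpow (Or.inr ⟨by linarith, h0⟩), sub_add_cancel, Real.one_rpow,
        ← neg_div_neg_eq, neg_neg, div_eq_inv_mul]
      gcongr
      linarith
    _ = ENNReal.ofReal ε⁻¹ * ENNReal.ofReal (x * (1 - x) ^ (-ε)) :=
      ENNReal.ofReal_mul (inv_nonneg.2 hε.le)

/-- The factor `x` absorbs the `1/t` of the letter `false`. The letter `true` lowers the exponent
`-ε` by one, and the integration restores it at the cost of a factor `ε⁻¹`. -/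
lemma iterIntegral_one_le {ε x : ℝ} (hε : 0 < ε) (hε1 : ε ≤ 1) (hx : x ∈ Ioo 0 1) (w : List Bool) :
    iterIntegral (fun _ => 1) (w ++ [true]) x ≤
      ENNReal.ofReal ε⁻¹ ^ (w.length + 1) * ENNReal.ofReal (x * (1 - x) ^ (-ε)) := by
  induction w generalizing x with
  | nil =>
    rw [List.nil_append, List.length_nil, zero_add, pow_one]
    refine le_trans ?_ (lintegral_Ioo_one_sub_rpow_le hε hε1 hx)
    refine setLIntegral_mono' measurableSet_Ioo fun t ht => ?_
    have ht1 : 0 < 1 - t := by linarith [ht.2, hx.2]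
    rw [iterIntegral, mul_one, dlogForm, ← Real.rpow_neg_one]
    exact ENNReal.ofReal_le_ofReal
      (Real.rpow_le_rpow_of_exponent_ge ht1 (by linarith [ht.1]) (by linarith))
  | cons c w ih =>
    calc ∫⁻ t in Ioo 0 x, dlogForm c t * iterIntegral (fun _ => 1) (w ++ [true]) t
      _ ≤ ∫⁻ t in Ioo 0 x,
            ENNReal.ofReal ε⁻¹ ^ (w.length + 1) * ENNReal.ofReal ((1 - t) ^ (-ε - 1)) := by
        refine setLIntegral_mono' measurableSet_Ioo fun t ht => ?_
        have ht' : t ∈ Ioo (0 : ℝ) 1 := ⟨ht.1, ht.2.trans hx.2⟩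
        refine (mul_le_mul_right (ih ht') _).trans ?_
        rw [mul_left_comm]
        exact mul_le_mul_right (dlogForm_mul_ofReal_le ε ht' c) _
      _ ≤ _ := by
        rw [lintegral_const_mul _ (by fun_prop), List.length_cons, pow_succ _ (w.length + 1),
          mul_assoc]
        exact mul_le_mul_right (lintegral_Ioo_one_sub_rpow_le hε hε1 hx) _

lemma lintegral_one_sub_rpow_ne_top {p : ℝ} (hp : -1 < p) :
    ∫⁻ x in Ioo (0 : ℝ) 1, ENNReal.ofReal ((1 - x) ^ p) ≠ ∞ := by
  have h := lintegral_Ioo_sub_left 1 0 1 fun y => ENNReal.ofReal (y ^ p)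
  rw [sub_self, sub_zero, lintegral_Ioo_ofReal zero_le_one
    (intervalIntegral.intervalIntegrable_rpow' hp) fun y hy => Real.rpow_nonneg hy.1.le _] at h
  exact h ▸ ENNReal.ofReal_ne_top

theorem lintegral_hurwitzPolylog_ne_top {b : ℝ} (hb : b < 1) (w : List Bool) :
    ∫⁻ x in Ioo 0 1, hurwitzPolylog 0 (fromWord w) x *
        (dlogForm false x * ENNReal.ofReal ((1 - x) ^ (-b))) ≠ ∞ := by
  obtain ⟨ε, hε, hεlt⟩ : ∃ ε > 0, ε < min 1 (1 - b) :=
    exists_between (lt_min one_pos (sub_pos.2 hb))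
  obtain ⟨hε1, hεb⟩ := lt_min_iff.1 hεlt
  set C := ENNReal.ofReal ε⁻¹ ^ (w.length + 1)
  have hbound : ∀ x ∈ Ioo (0 : ℝ) 1, hurwitzPolylog 0 (fromWord w) x *
      (dlogForm false x * ENNReal.ofReal ((1 - x) ^ (-b))) ≤
        C * ENNReal.ofReal ((1 - x) ^ (-ε - b)) := fun x hx => by
    have hx1 : 0 < 1 - x := sub_pos.2 hx.2
    have hLi : hurwitzPolylog 0 (fromWord w) x ≤ C * ENNReal.ofReal (x * (1 - x) ^ (-ε)) := by
      simpa [hurwitzPolylog_fromWord one_pos (Ioo_subset_Icc_self hx) w]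
        using iterIntegral_one_le hε hε1.le hx w
    have hprod : x * (1 - x) ^ (-ε) * (x⁻¹ * (1 - x) ^ (-b)) = (1 - x) ^ (-ε - b) := by
      rw [sub_eq_add_neg (-ε), Real.rpow_add hx1]
      field_simp [hx.1.ne']
    refine (mul_le_mul_left hLi _).trans_eq ?_
    rw [dlogForm, ← ENNReal.ofReal_mul (inv_nonneg.2 hx.1.le), mul_assoc,
      ← ENNReal.ofReal_mul (mul_nonneg hx.1.le (Real.rpow_nonneg hx1.le _)), hprod]
  refine ne_top_of_le_ne_top ?_ (setLIntegral_mono' measurableSet_Ioo hbound)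
  rw [lintegral_const_mul _ (by fun_prop)]
  exact ENNReal.mul_ne_top (ENNReal.pow_ne_top ENNReal.ofReal_ne_top)
    (lintegral_one_sub_rpow_ne_top (by linarith))

lemma hurwitzPolylog_one_ne_top {b : ℝ} (hb : b < 1) (w : List Bool) :
    hurwitzPolylog b (fromWord (false :: w)) 1 ≠ ∞ := by
  have h := lintegral_hurwitzPolylog_ne_top hb (w.reverse.map (!·))
  rw [lintegral_hurwitzPolylog_eq_hurwitzPolylog_one hb] at h
  simpa [Function.comp_def] using h

/-! ### Comparison with `MPL` and `HMZV` -/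

lemma hurwitzWeight_ne_top {b : ℝ} (hb : b < 1) (k : List ℕ) (n : IndexTuple k.length) :
    hurwitzWeight b k n ≠ ∞ := by
  refine ENNReal.prod_ne_top fun i _ => ENNReal.pow_ne_top (ENNReal.inv_ne_top.2 ?_)
  exact (ENNReal.ofReal_pos.2 (n.sub_pos_of_lt_one hb i)).ne'

lemma toReal_hurwitzWeight {b : ℝ} (hb : b < 1) (k : List ℕ) (n : IndexTuple k.length) :
    (hurwitzWeight b k n).toReal = ∏ i, ((n.1 i - b : ℝ)⁻¹) ^ k.get i := by
  simp_rw [hurwitzWeight, ENNReal.toReal_prod, ENNReal.toReal_pow, ENNReal.toReal_inv,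
    ENNReal.toReal_ofReal (n.sub_pos_of_lt_one hb _).le]

lemma toReal_hurwitzPolylog {b x : ℝ} (hb : b < 1) (hx : 0 ≤ x) (k : List ℕ) :
    (hurwitzPolylog b k x).toReal =
      ∑' n : IndexTuple k.length, (∏ i, ((n.1 i - b : ℝ)⁻¹) ^ k.get i) * x ^ (n.head - b) := by
  rw [hurwitzPolylog, ENNReal.tsum_toReal_eq fun n =>
    ENNReal.mul_ne_top (hurwitzWeight_ne_top hb k n) ENNReal.ofReal_ne_top]
  simp_rw [ENNReal.toReal_mul, toReal_hurwitzWeight hb,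
    ENNReal.toReal_ofReal (Real.rpow_nonneg hx _)]

lemma MPL_eq_toReal_hurwitzPolylog (k : List ℕ) {x : ℝ} (hx : 0 ≤ x) :
    MPL k x = (hurwitzPolylog 0 k x).toReal := by
  cases k with
  | nil => simp [MPL, hurwitzPolylog_nil]
  | cons a t =>
    rw [toReal_hurwitzPolylog one_pos hx, MPL, dif_pos (by simp)]
    refine tsum_congr fun n => ?_
    simp only [sub_zero, Real.rpow_natCast, inv_pow, Finset.prod_inv_distrib]
    exact div_eq_inv_mul _ _

lemma HMZV_one_sub_ofReal {b : ℝ} (hb : b < 1) (k : List ℕ) :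
    HMZV k (1 - b) = ((hurwitzPolylog b k 1).toReal : ℂ) := by
  rw [toReal_hurwitzPolylog hb zero_le_one, HMZV, Complex.ofReal_tsum]
  refine tsum_congr fun n => ?_
  simp only [Real.one_rpow, mul_one, Complex.ofReal_prod]
  refine Finset.prod_congr rfl fun i _ => ?_
  push_cast
  rw [zpow_neg, zpow_natCast, inv_pow]
  ring_nf

/-! ### Analytic continuation -/

lemma norm_HMZV_term_le {b : ℝ} (hb : b < 1) (k : List ℕ) {α : ℂ} (hα : α.re < b)
    (n : IndexTuple k.length) :
    ‖∏ i, ((n.1 i : ℂ) + (1 - α) - 1) ^ (-(k.get i : ℤ))‖ ≤ (hurwitzWeight b k n).toReal := by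
  rw [toReal_hurwitzWeight hb, norm_prod]
  refine Finset.prod_le_prod (fun i _ => norm_nonneg _) fun i _ => ?_
  rw [zpow_neg, zpow_natCast, norm_inv, norm_pow, ← inv_pow]
  have hre : (n.1 i : ℝ) - b ≤ ‖(n.1 i : ℂ) + (1 - α) - 1‖ := by
    refine le_trans ?_ (Complex.re_le_norm _)
    simp only [Complex.sub_re, Complex.add_re, Complex.natCast_re, Complex.one_re]
    linarith
  gcongr
  exact n.sub_pos_of_lt_one hb i

lemma differentiableOn_HMZV_one_sub {k : List ℕ} (hk : ∀ b < 1, hurwitzPolylog b k 1 ≠ ∞) :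
    DifferentiableOn ℂ (fun α => HMZV k (1 - α)) {α | α.re < 1} := by
  intro α hα
  obtain ⟨b, hαb, hb⟩ := exists_between (show α.re < 1 from hα)
  have hopen : IsOpen {z : ℂ | z.re < b} := isOpen_lt Complex.continuous_re continuous_const
  have hsum : Summable fun n => (hurwitzWeight b k n).toReal :=
    ENNReal.summable_toReal (by simpa [hurwitzPolylog] using hk b hb)
  have hdiff : ∀ n : IndexTuple k.length, DifferentiableOn ℂ
      (fun z => ∏ i, ((n.1 i : ℂ) + (1 - z) - 1) ^ (-(k.get i : ℤ))) {z | z.re < b} := by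
    refine fun n => DifferentiableOn.fun_finsetProd fun i _ z hz => ?_
    refine (DifferentiableAt.zpow (by fun_prop) (Or.inl fun h0 => ?_)).differentiableWithinAt
    have := congrArg Complex.re h0
    simp only [Complex.sub_re, Complex.add_re, Complex.natCast_re, Complex.one_re,
      Complex.zero_re] at this
    linarith [n.sub_pos_of_lt_one hb i, show z.re < b from hz]
  exact ((Complex.differentiableOn_tsum_of_summable_norm hsum hdiff hopen fun n z hz =>
    norm_HMZV_term_le hb k hz n).differentiableAt (hopen.mem_nhds hαb)).differentiableWithinAt

/-- The measure `Li_k(x) dx / x` on the unit interval. The integral of the theorem is the moment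
generating function of `-log (1 - x)` under it. -/
noncomputable def polylogMeasure (k : List ℕ) : Measure ℝ :=
  (volume.restrict (Ioo 0 1)).withDensity fun x => hurwitzPolylog 0 k x * dlogForm false x

lemma measurable_hurwitzPolylog (b : ℝ) (k : List ℕ) : Measurable (hurwitzPolylog b k) :=
  Measurable.tsum fun n => by fun_prop

lemma exp_mul_neg_log {x : ℝ} (hx : 0 < x) (b : ℝ) :
    Real.exp (b * -Real.log x) = x ^ (-b) := by
  rw [Real.rpow_def_of_pos hx]
  ring_nf

lemma lintegral_polylogMeasure (k : List ℕ) (b : ℝ) :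
    ∫⁻ x, ENNReal.ofReal (Real.exp (b * -Real.log (1 - x))) ∂polylogMeasure k =
      ∫⁻ x in Ioo 0 1, hurwitzPolylog 0 k x *
        (dlogForm false x * ENNReal.ofReal ((1 - x) ^ (-b))) := by
  refine (lintegral_withDensity_eq_lintegral_mul _
    ((measurable_hurwitzPolylog 0 k).mul (measurable_dlogForm false)) (by fun_prop)).trans ?_
  refine setLIntegral_congr_fun measurableSet_Ioo fun x hx => ?_
  simp only [Pi.mul_apply, exp_mul_neg_log (sub_pos.2 hx.2), mul_assoc]

lemma mgf_polylogMeasure (k : List ℕ) (b : ℝ) :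
    mgf (fun x => -Real.log (1 - x)) (polylogMeasure k) b =
      (∫⁻ x in Ioo 0 1, hurwitzPolylog 0 k x *
        (dlogForm false x * ENNReal.ofReal ((1 - x) ^ (-b)))).toReal := by
  rw [mgf, integral_eq_lintegral_of_nonneg_ae (.of_forall fun x => (Real.exp_pos _).le)
    (Measurable.aestronglyMeasurable (by fun_prop)), lintegral_polylogMeasure]

lemma Iio_one_subset_integrableExpSet_polylogMeasure (w : List Bool) :
    Iio 1 ⊆ integrableExpSet (fun x => -Real.log (1 - x)) (polylogMeasure (fromWord w)) := by
  intro b hb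
  refine (lintegral_ofReal_ne_top_iff_integrable (Measurable.aestronglyMeasurable (by fun_prop))
    (.of_forall fun x => (Real.exp_pos _).le)).1 ?_
  rw [lintegral_polylogMeasure]
  exact lintegral_hurwitzPolylog_ne_top hb w

lemma complexMGF_polylogMeasure (w : List Bool) (α : ℂ) :
    complexMGF (fun x => -Real.log (1 - x)) (polylogMeasure (fromWord w)) α =
      ∫ x in (0 : ℝ)..1, (MPL (fromWord w) x : ℂ) / ((x : ℂ) * ((1 : ℂ) - x) ^ α) := by
  have hmeas : Measurable fun x => hurwitzPolylog 0 (fromWord w) x * dlogForm false x :=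
    (measurable_hurwitzPolylog 0 _).mul (measurable_dlogForm false)
  have hfin : ∀ᵐ x ∂volume.restrict (Ioo 0 1),
      hurwitzPolylog 0 (fromWord w) x * dlogForm false x < ∞ :=
    ae_lt_top hmeas (by simpa using lintegral_hurwitzPolylog_ne_top one_pos w)
  rw [complexMGF, polylogMeasure, integral_withDensity_eq_integral_toReal_smul hmeas hfin,
    intervalIntegral.integral_of_le zero_le_one, integral_Ioc_eq_integral_Ioo]
  refine setIntegral_congr_fun measurableSet_Ioo fun x hx => ?_
  have hx1 : 0 < 1 - x := sub_pos.2 hx.2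
  have hpow : Complex.exp (α * (-Real.log (1 - x) : ℝ)) = (((1 : ℂ) - x) ^ α)⁻¹ := by
    rw [← Complex.cpow_neg, Complex.cpow_def_of_ne_zero (by exact_mod_cast hx1.ne')]
    push_cast [Complex.ofReal_log hx1.le]
    ring_nf
  simp only [ENNReal.toReal_mul, dlogForm, ENNReal.toReal_ofReal (inv_nonneg.2 hx.1.le), hpow,
    MPL_eq_toReal_hurwitzPolylog _ hx.1.le, Complex.real_smul, Complex.ofReal_mul,
    Complex.ofReal_inv]
  rw [div_eq_mul_inv, mul_inv, mul_assoc]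

theorem eqOn_re_lt_of_forall_ofReal_eq {f g : ℂ → ℂ} {c : ℝ}
    (hf : DifferentiableOn ℂ f {z | z.re < c}) (hg : DifferentiableOn ℂ g {z | z.re < c})
    (hfg : ∀ x : ℝ, x < c → f x = g x) : EqOn f g {z | z.re < c} := by
  have hopen : IsOpen {z : ℂ | z.re < c} := isOpen_lt Complex.continuous_re continuous_const
  have hmem : ((c - 1 : ℝ) : ℂ) ∈ {z : ℂ | z.re < c} := by simp
  have htendsto : Tendsto Complex.ofReal (𝓝[≠] (c - 1)) (𝓝[≠] ((c - 1 : ℝ) : ℂ)) :=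
    Complex.continuous_ofReal.continuousWithinAt.tendsto_nhdsWithin
      fun x hx h => hx (Complex.ofReal_injective h)
  have hevent : ∀ᶠ x : ℝ in 𝓝[≠] (c - 1), f x = g x :=
    (eventually_nhdsWithin_of_eventually_nhds (eventually_lt_nhds (by linarith))).mono hfg
  exact (hf.analyticOnNhd hopen).eqOn_of_preconnected_of_frequently_eq (hg.analyticOnNhd hopen)
    (convex_halfSpace_re_lt c).isPreconnected hmem (htendsto.frequently hevent.frequently)

theorem integral_MPL_fromWord (w : List Bool) {α : ℂ} (hα : α.re < 1) :
    ∫ x in (0 : ℝ)..1, (MPL (fromWord w) x : ℂ) / ((x : ℂ) * ((1 : ℂ) - x) ^ α) =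
      HMZV (fromWord (false :: w.reverse.map (!·))) (1 - α) := by
  rw [← complexMGF_polylogMeasure]
  refine eqOn_re_lt_of_forall_ofReal_eq (differentiableOn_complexMGF.mono fun z hz =>
    interior_maximal (Iio_one_subset_integrableExpSet_polylogMeasure w) isOpen_Iio hz)
    (differentiableOn_HMZV_one_sub fun b hb => hurwitzPolylog_one_ne_top hb _)
    (fun b hb => ?_) hα
  rw [complexMGF_ofReal, mgf_polylogMeasure, HMZV_one_sub_ofReal hb,
    lintegral_hurwitzPolylog_eq_hurwitzPolylog_one hb]

theorem stmt2 (k : List ℕ) (hk : k ≠ []) (hkpos : ∀ a ∈ k, 0 < a)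
    (α : ℂ) (hα : ∀ j : ℕ, 0 < j → α ≠ (j : ℂ)) (hre : α.re < 1) :
    (∫ x in (0:ℝ)..1,
        ((MPL k x : ℝ) : ℂ) / ((x : ℂ) * ((1 : ℂ) - (x : ℂ)) ^ α)) =
      HMZV (plusOne (HDual k.reverse)) (1 - α) := by
  rw [plusOne_HDual_reverse, ← integral_MPL_fromWord (toWord k) hre, fromWord_toWord hk hkpos]
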